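/- Let G be a P4-sparse graph and let A be a set of four vertices inducing a P4 in G. Then there do not exist distinct vertices u, v in P(A) and a vertex x in I(A) such that x is adjacent to both u and v. -/

import Mathlib

open SimpleGraph

variable {V : Type*}

/-- `a, b, c, d` form an induced path on four vertices (a `P4`) in `G`. -/
def IsP4 (G : SimpleGraph V) (a b c d : V) : Prop :=
  a ≠ b ∧ a ≠ c ∧ a ≠ d ∧ b ≠ c ∧ b ≠ d ∧ c ≠ d ∧
    G.Adj a b ∧ G.Adj b c ∧ G.Adj c d ∧ ¬G.Adj a c ∧ ¬G.Adj a d ∧ ¬G.Adj b d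

/-- A graph is a cograph if it contains no induced `P4`. -/
def IsCograph (G : SimpleGraph V) : Prop :=
  ∀ a b c d : V, ¬IsP4 G a b c d

/-- The vertex set `A` induces a `P4` in `G`. -/
def InducesP4 (G : SimpleGraph V) (A : Set V) : Prop :=
  ∃ a b c d : V, IsP4 G a b c d ∧ A = {a, b, c, d}

/-- `G` is `P4`-sparse: every set of five vertices induces at most one `P4`. -/
def P4Sparse (G : SimpleGraph V) : Prop :=
  ∀ s : Set V, s.ncard = 5 →
    ∀ A B : Set V, A ⊆ s → B ⊆ s → InducesP4 G A → InducesP4 G B → A = B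

/-- `F` is a deletion set of `G`: a set of edges of `G` whose removal yields a cograph. -/
def IsDeletionSet (G : SimpleGraph V) (F : Set (Sym2 V)) : Prop :=
  F ⊆ G.edgeSet ∧ IsCograph (G.deleteEdges F)

/-- The minimum size of a deletion set of `G`. -/
noncomputable def cographAlpha (G : SimpleGraph V) : ℕ :=
  sInf {n | ∃ F : Set (Sym2 V), IsDeletionSet G F ∧ F.ncard = n}

/-- `T(A)`: the vertices outside `A` adjacent to all vertices of `A`. -/
def tSet (G : SimpleGraph V) (A : Set V) : Set V :=
  {v | v ∉ A ∧ ∀ a ∈ A, G.Adj v a}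

/-- `I(A)`: the vertices outside `A` adjacent to no vertex of `A`. -/
def iSet (G : SimpleGraph V) (A : Set V) : Set V :=
  {v | v ∉ A ∧ ∀ a ∈ A, ¬G.Adj v a}

/-- `P(A)`: the vertices `v` outside `A` with `1 ≤ |N(v) ∩ A| ≤ 3`. -/
def pSet (G : SimpleGraph V) (A : Set V) : Set V :=
  {v | v ∉ A ∧ 1 ≤ (G.neighborSet v ∩ A).ncard ∧ (G.neighborSet v ∩ A).ncard ≤ 3}

/-!
A vertex `u ∉ A` lies in no `P4` inside `A ∪ {u}`, since that five-set already induces `A`. Hence a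
vertex of `P(A)` sees exactly the two midpoints of the path `a b c d` on `A`. If `u ∈ P(A)` has a
neighbour `x ∈ I(A)`, then `a b u x` is again a `P4`. A second `v ∈ P(A)` sees `b` and misses `a`,
so it sees exactly the midpoints `b` and `u` of this new path; in particular it misses `x`.
-/

section

variable {G : SimpleGraph V} {A B : Set V} {a b c d u x : V}

theorem isP4_iff : IsP4 G a b c d ↔
    G.Adj a b ∧ G.Adj b c ∧ G.Adj c d ∧ ¬G.Adj a c ∧ ¬G.Adj a d ∧ ¬G.Adj b d := by
  refine ⟨fun ⟨_, _, _, _, _, _, h⟩ ↦ h, fun h ↦ ?_⟩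
  obtain ⟨hab, hbc, hcd, hac, had, hbd⟩ := h
  have hne_ac : a ≠ c := fun h ↦ had (h ▸ hcd)
  have hne_ad : a ≠ d := fun h ↦ hac (h ▸ hcd.symm)
  have hne_bd : b ≠ d := fun h ↦ had (h ▸ hab)
  exact ⟨hab.ne, hne_ac, hne_ad, hbc.ne, hne_bd, hcd.ne, hab, hbc, hcd, hac, had, hbd⟩

theorem IsP4.reverse (h : IsP4 G a b c d) : IsP4 G d c b a := by
  simp only [isP4_iff, G.adj_comm] at h ⊢
  tauto

theorem IsP4.inducesP4 (h : IsP4 G a b c d) : InducesP4 G {a, b, c, d} :=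
  ⟨a, b, c, d, h, rfl⟩

theorem InducesP4.ncard_eq_four (hA : InducesP4 G A) : A.ncard = 4 := by
  obtain ⟨a, b, c, d, ⟨hab, hac, had, hbc, hbd, hcd, -⟩, rfl⟩ := hA
  rw [Set.ncard_insert_of_notMem (by simp [hab, hac, had]),
    Set.ncard_insert_of_notMem (by simp [hbc, hbd]), Set.ncard_pair hcd]

theorem mem_pSet_iff (hA : A.ncard = 4) :
    u ∈ pSet G A ↔ u ∉ A ∧ (∃ y ∈ A, G.Adj u y) ∧ ∃ z ∈ A, ¬G.Adj u z := by
  have hfin : A.Finite := Set.finite_of_ncard_ne_zero (by lia)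
  have hsome : 1 ≤ (G.neighborSet u ∩ A).ncard ↔ ∃ y ∈ A, G.Adj u y := by
    rw [Set.inter_comm]
    exact Set.ncard_pos (hfin.inter_of_left _)
  have hall : A.ncard ≤ (G.neighborSet u ∩ A).ncard ↔ A ⊆ G.neighborSet u :=
    ⟨fun h ↦ Set.inter_eq_right.1 (Set.eq_of_subset_of_ncard_le Set.inter_subset_right h hfin),
      fun h ↦ by rw [Set.inter_eq_right.2 h]⟩
  have hnotall : (G.neighborSet u ∩ A).ncard ≤ 3 ↔ ∃ z ∈ A, ¬G.Adj u z := calc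
    _ ↔ ¬A.ncard ≤ (G.neighborSet u ∩ A).ncard := by lia
    _ ↔ ¬A ⊆ G.neighborSet u := not_congr hall
    _ ↔ ∃ z ∈ A, ¬G.Adj u z := Set.not_subset
  exact and_congr_right' (and_congr hsome hnotall)

namespace P4Sparse

theorem notMem_of_subset_insert (hG : P4Sparse G) (hA : InducesP4 G A) (hB : InducesP4 G B)
    (hu : u ∉ A) (hBA : B ⊆ insert u A) : u ∉ B := by
  have hfin : A.Finite := Set.finite_of_ncard_ne_zero (by simp [hA.ncard_eq_four])
  have hcard : (insert u A).ncard = 5 := by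
    rw [Set.ncard_insert_of_notMem hu hfin, hA.ncard_eq_four]
  rwa [hG _ hcard B A hBA (Set.subset_insert u A) hB hA]

theorem not_isP4_of_subset_insert (hG : P4Sparse G) (h : IsP4 G a b c d)
    (hu : u ∉ ({a, b, c, d} : Set V)) {p q r s : V}
    (hsub : ({p, q, r, s} : Set V) ⊆ {u, a, b, c, d}) (hmem : u ∈ ({p, q, r, s} : Set V)) :
    ¬IsP4 G p q r s :=
  fun h' ↦ hG.notMem_of_subset_insert h.inducesP4 h'.inducesP4 hu hsub hmem

theorem adj_third_of_adj_second (hG : P4Sparse G) (h : IsP4 G a b c d)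
    (hu : u ∉ ({a, b, c, d} : Set V)) (hub : G.Adj u b) (hud : ¬G.Adj u d) : G.Adj u c := by
  obtain ⟨-, hbc, hcd, -, -, hbd⟩ := isP4_iff.1 h
  by_contra huc
  have hubcd : IsP4 G u b c d := isP4_iff.2 ⟨hub, hbc, hcd, huc, hud, hbd⟩
  exact hG.not_isP4_of_subset_insert h hu (by grind) (by simp) hubcd

theorem mem_tSet_of_adj_first (hG : P4Sparse G) (h : IsP4 G a b c d)
    (hu : u ∉ ({a, b, c, d} : Set V)) (hua : G.Adj u a) : u ∈ tSet G {a, b, c, d} := by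
  obtain ⟨hab, hbc, hcd, hac, had, hbd⟩ := isP4_iff.1 h
  have huabc : ¬IsP4 G u a b c := hG.not_isP4_of_subset_insert h hu (by grind) (by simp)
  have haudc : ¬IsP4 G a u d c := hG.not_isP4_of_subset_insert h hu (by grind) (by simp)
  have haucd : ¬IsP4 G a u c d := hG.not_isP4_of_subset_insert h hu (by grind) (by simp)
  have hduab : ¬IsP4 G d u a b := hG.not_isP4_of_subset_insert h hu (by grind) (by simp)
  have huc : G.Adj u c := by
    by_contra huc
    have hub : G.Adj u b := by
      by_contra hub
      exact huabc (isP4_iff.2 ⟨hua, hab, hbc, hub, huc, hac⟩)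
    have hud : G.Adj u d := by
      by_contra hud
      exact huc (hG.adj_third_of_adj_second h hu hub hud)
    exact haudc (isP4_iff.2 ⟨hua.symm, hud, hcd.symm, had, hac, huc⟩)
  have hud : G.Adj u d := by
    by_contra hud
    exact haucd (isP4_iff.2 ⟨hua.symm, huc, hcd, hac, had, hud⟩)
  have hub : G.Adj u b := by
    by_contra hub
    exact hduab (isP4_iff.2
      ⟨hud.symm, hua, hab, fun h ↦ had h.symm, fun h ↦ hbd h.symm, hub⟩)
  refine ⟨hu, ?_⟩
  rintro y (rfl | rfl | rfl | rfl) <;> assumption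

theorem adj_midpoints_of_mem_pSet (hG : P4Sparse G) (h : IsP4 G a b c d)
    (hu : u ∈ pSet G {a, b, c, d}) :
    ¬G.Adj u a ∧ G.Adj u b ∧ G.Adj u c ∧ ¬G.Adj u d := by
  have hrev : ({d, c, b, a} : Set V) = {a, b, c, d} := by grind
  obtain ⟨huA, ⟨y, hy, huy⟩, z, hz, huz⟩ := (mem_pSet_iff h.inducesP4.ncard_eq_four).1 hu
  have huA' : u ∉ ({d, c, b, a} : Set V) := hrev ▸ huA
  have hua : ¬G.Adj u a := fun hua ↦ huz ((hG.mem_tSet_of_adj_first h huA hua).2 z hz)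
  have hud : ¬G.Adj u d := fun hud ↦
    huz ((hG.mem_tSet_of_adj_first h.reverse huA' hud).2 z (hrev ▸ hz))
  have hbc : G.Adj u b ↔ G.Adj u c :=
    ⟨fun hub ↦ hG.adj_third_of_adj_second h huA hub hud,
      fun huc ↦ hG.adj_third_of_adj_second h.reverse huA' huc hua⟩
  have hub : G.Adj u b := by
    rcases hy with rfl | rfl | rfl | rfl
    exacts [absurd huy hua, huy, hbc.2 huy, absurd huy hud]
  exact ⟨hua, hub, hbc.1 hub, hud⟩

theorem isP4_of_mem_pSet_of_mem_iSet (hG : P4Sparse G) (h : IsP4 G a b c d)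
    (hu : u ∈ pSet G {a, b, c, d}) (hx : x ∈ iSet G {a, b, c, d}) (hxu : G.Adj x u) :
    IsP4 G a b u x := by
  obtain ⟨hua, hub, -, -⟩ := hG.adj_midpoints_of_mem_pSet h hu
  have hxa : ¬G.Adj x a := hx.2 a (by simp)
  have hxb : ¬G.Adj x b := hx.2 b (by simp)
  rw [G.adj_comm] at hua hxa hxb
  exact isP4_iff.2 ⟨(isP4_iff.1 h).1, hub.symm, hxu.symm, hua, hxa, hxb⟩

end P4Sparse

end

/-- **Observation 2.7, complement form.** If `G` is `P4`-sparse and `A`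
induces a `P4`, then there are no distinct `u, v ∈ P(A)` and `x ∈ I(A)` such that `x` is
adjacent to both `u` and `v`. -/
theorem p4Sparse_obs_2_7_compl (G : SimpleGraph V) (hG : P4Sparse G)
    (a b c d : V) (hP4 : IsP4 G a b c d) (A : Set V) (hA : A = {a, b, c, d}) :
    ¬∃ u v x : V, u ≠ v ∧ u ∈ pSet G A ∧ v ∈ pSet G A ∧ x ∈ iSet G A ∧
      G.Adj x u ∧ G.Adj x v := by
  subst hA
  rintro ⟨u, v, x, huv, hu, hv, hx, hxu, hxv⟩
  obtain ⟨hva, hvb, -, -⟩ := hG.adj_midpoints_of_mem_pSet hP4 hv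
  have habux : IsP4 G a b u x := hG.isP4_of_mem_pSet_of_mem_iSet hP4 hu hx hxu
  have hvB : v ∉ ({a, b, u, x} : Set V) := by
    have hvA := hv.1
    simp only [Set.mem_insert_iff, Set.mem_singleton_iff, not_or] at hvA ⊢
    exact ⟨hvA.1, hvA.2.1, huv.symm, hxv.ne'⟩
  have hv' : v ∈ pSet G {a, b, u, x} :=
    (mem_pSet_iff habux.inducesP4.ncard_eq_four).2
      ⟨hvB, ⟨b, by simp, hvb⟩, a, by simp, hva⟩
  obtain ⟨-, -, -, hvx⟩ := hG.adj_midpoints_of_mem_pSet habux hv'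
  exact hvx hxv.symm
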